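/- Let (p_n) be a sequence of integers with p_n ≥ 2 for all n, p_n → ∞, and p_n = o(n²). Let ξ > 0 and s ∈ ℝ, and set κ_n := p_n ξ/√n and κ_{n,s} := p_n (ξ + s/√p_n)/√n, assuming ξ + s/√p_n > 0 for all n. Then n [ log H_{p_n/2 − 1}(κ_n) − log H_{p_n/2 − 1}(κ_{n,s}) ] + s ξ √p_n → −s²/2 as n → ∞. -/

import Mathlib

/-!
`Hfun ν x` is the modified Bessel function `I_ν x`, normalised by its behaviour at `0`, namely
`Γ(ν + 1) (2 / x) ^ ν I_ν x`. Integrating Poisson's integral by parts gives the Bessel relations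
`H_ν' = x / (2(ν + 1)) H_{ν+1}` and `H_ν = H_{ν+1} + x² / (4(ν + 1)(ν + 2)) H_{ν+2}`. The second
one shows `0 < H_{ν+2} ≤ H_{ν+1} ≤ H_ν`, and together they give
`(log H_ν)' = x / (2(ν + 1)) + O((x / (2(ν + 1)))³)` with a constant uniform in `ν`. Hence
`log H_ν` is `x² / (4(ν + 1))` up to an explicit Lipschitz error. For `ν = p / 2 - 1` and
`x ∼ p / √n` the quadratic part contributes exactly `-s ξ √p - s² / 2` to the rescaled difference,
and the error is `O(√p / n)`.
-/

open MeasureTheory intervalIntegral Filter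

/-- `H_ν(x) = (∫_{-1}^1 (1-t²)^{ν-1/2} e^{xt} dt) / (∫_{-1}^1 (1-t²)^{ν-1/2} dt)`. -/
noncomputable def Hfun (ν x : ℝ) : ℝ :=
  (∫ t in (-1 : ℝ)..1, (1 - t ^ 2) ^ (ν - 1 / 2) * Real.exp (x * t)) /
    (∫ t in (-1 : ℝ)..1, (1 - t ^ 2) ^ (ν - 1 / 2))

lemma hasDerivAt_integral_mul_exp {μ : Measure ℝ} {w : ℝ → ℝ} {b c : ℝ}
    (hw : IntervalIntegrable w μ b c) (x : ℝ) :
    HasDerivAt (fun y => ∫ t in b..c, w t * Real.exp (y * t) ∂μ)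
      (∫ t in b..c, w t * (t * Real.exp (x * t)) ∂μ) x := by
  obtain ⟨C, hC⟩ : ∃ C, ∀ t ∈ Set.uIcc b c, |t| ≤ C :=
    isCompact_uIcc.exists_bound_of_continuousOn continuousOn_id
  have hint {g : ℝ → ℝ} (hg : Continuous g) : IntervalIntegrable (fun t => w t * g t) μ b c :=
    hw.mul_continuousOn hg.continuousOn
  refine (hasDerivAt_integral_of_dominated_loc_of_deriv_le
    (F := fun y t => w t * Real.exp (y * t)) (F' := fun y t => w t * (t * Real.exp (y * t)))
    (bound := fun t => |w t| * (C * Real.exp ((|x| + 1) * C))) (Metric.ball_mem_nhds x one_pos)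
    (.of_forall fun y => (hint (by fun_prop)).def'.aestronglyMeasurable)
    (hint (by fun_prop)) (hint (by fun_prop)).def'.aestronglyMeasurable
    (.of_forall fun t ht y hy => ?_) (hw.abs.mul_const _) (.of_forall fun t _ y _ => ?_)).2
  · have htC : |t| ≤ C := hC t (Set.uIoc_subset_uIcc ht)
    have hyx : |y| ≤ |x| + 1 := by
      rw [Metric.mem_ball, Real.dist_eq] at hy
      linarith [abs_sub_abs_le_abs_sub y x]
    have hyt : y * t ≤ (|x| + 1) * C :=
      calc y * t ≤ |y| * |t| := (le_abs_self _).trans_eq (abs_mul y t)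
        _ ≤ (|x| + 1) * C := by gcongr
    rw [Real.norm_eq_abs, abs_mul, abs_mul, Real.abs_exp]
    gcongr
    exact (abs_nonneg t).trans htC
  · simpa [mul_comm t] using (((hasDerivAt_id y).mul_const t).exp.const_mul (w t))

/-- Poisson's integral for the modified Bessel function of order `a + 1 / 2`, up to the factor
`x ^ (a + 1 / 2)` and a constant; it is the numerator of `Hfun (a + 1 / 2) x`. -/
noncomputable def besselIntegral (a x : ℝ) : ℝ :=
  ∫ t in (-1 : ℝ)..1, (1 - t ^ 2) ^ a * Real.exp (x * t)

section BesselIntegral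

variable {a : ℝ}

lemma intervalIntegrable_one_sub_sq_rpow (ha : -1 < a) :
    IntervalIntegrable (fun t : ℝ => (1 - t ^ 2) ^ a) volume (-1) 1 := by
  have hright : IntervalIntegrable (fun t : ℝ => (1 - t ^ 2) ^ a) volume 0 1 := by
    have hsing : IntervalIntegrable (fun t : ℝ => (1 - t) ^ a) volume 0 1 := by
      simpa using ((intervalIntegrable_rpow' ha).comp_sub_left 1 :
        IntervalIntegrable (fun t : ℝ => (1 - t) ^ a) volume (1 - 1) (1 - 0))
    have hsmooth : ContinuousOn (fun t : ℝ => (1 + t) ^ a) (Set.uIcc 0 1) := by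
      rw [Set.uIcc_of_le zero_le_one]
      exact ContinuousOn.rpow_const (by fun_prop) fun t ht => Or.inl (by linarith [ht.1])
    refine (hsing.mul_continuousOn hsmooth).congr fun t ht => ?_
    rw [Set.uIoc_of_le zero_le_one] at ht
    rw [← Real.mul_rpow (by linarith [ht.2]) (by linarith [ht.1])]
    ring_nf
  have hleft : IntervalIntegrable (fun t : ℝ => (1 - t ^ 2) ^ a) volume (-1) 0 := by
    simpa using ((IntervalIntegrable.iff_comp_neg (by finiteness)).1 hright).symm
  exact hleft.trans hright

lemma intervalIntegrable_one_sub_sq_rpow_mul (ha : -1 < a) {g : ℝ → ℝ} (hg : Continuous g) :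
    IntervalIntegrable (fun t : ℝ => (1 - t ^ 2) ^ a * g t) volume (-1) 1 :=
  (intervalIntegrable_one_sub_sq_rpow ha).mul_continuousOn hg.continuousOn

lemma integral_one_sub_sq_rpow_add_one_mul_deriv (ha : -1 < a) {u u' : ℝ → ℝ}
    (hu : ContinuousOn u (Set.uIcc (-1) 1))
    (huu' : ∀ t ∈ Set.Ioo (-1 : ℝ) 1, HasDerivAt u (u' t) t)
    (hu' : IntervalIntegrable u' volume (-1) 1) :
    ∫ t in (-1 : ℝ)..1, (1 - t ^ 2) ^ (a + 1) * u' t =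
      2 * (a + 1) * ∫ t in (-1 : ℝ)..1, (1 - t ^ 2) ^ a * (t * u t) := by
  have hweight : ∀ t ∈ Set.Ioo (-1 : ℝ) 1, HasDerivAt (fun t : ℝ => (1 - t ^ 2) ^ (a + 1))
      ((1 - t ^ 2) ^ a * (-(2 * (a + 1) * t))) t := by
    intro t ht
    have hpos : 0 < 1 - t ^ 2 := by nlinarith [ht.1, ht.2]
    refine (((hasDerivAt_pow 2 t).const_sub 1).rpow_const (Or.inl hpos.ne')).congr_deriv ?_
    rw [add_sub_cancel_right]
    push_cast
    ring
  rw [integral_mul_deriv_eq_deriv_mul_of_hasDerivAt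
    (Continuous.continuousOn <| .rpow_const (by fun_prop) fun _ => Or.inr (by linarith)) hu
    (by simpa only [min_eq_left, max_eq_right, neg_le_self_iff, zero_le_one] using hweight)
    (by simpa using huu') (intervalIntegrable_one_sub_sq_rpow_mul ha (by fun_prop)) hu',
    ← intervalIntegral.integral_const_mul]
  simp only [one_pow, sub_self, even_two, Even.neg_pow, Real.zero_rpow (by linarith : a + 1 ≠ 0),
    zero_mul, zero_sub, ← intervalIntegral.integral_neg]
  exact integral_congr fun t _ => by ring

lemma besselIntegral_pos (ha : -1 < a) (x : ℝ) : 0 < besselIntegral a x := by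
  refine intervalIntegral_pos_of_pos_on (intervalIntegrable_one_sub_sq_rpow_mul ha (by fun_prop))
    (fun t ht => ?_) (by norm_num)
  have : 0 < 1 - t ^ 2 := by nlinarith [ht.1, ht.2]
  positivity

lemma integral_one_sub_sq_rpow_mul_id_mul_exp (ha : -1 < a) (x : ℝ) :
    ∫ t in (-1 : ℝ)..1, (1 - t ^ 2) ^ a * (t * Real.exp (x * t)) =
      x / (2 * (a + 1)) * besselIntegral (a + 1) x := by
  have hparts := integral_one_sub_sq_rpow_add_one_mul_deriv ha
    (u := fun t => Real.exp (x * t)) (u' := fun t => Real.exp (x * t) * x) (by fun_prop)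
    (fun t _ => by simpa using ((hasDerivAt_id t).const_mul x).exp)
    (Continuous.intervalIntegrable (by fun_prop) _ _)
  simp only [← mul_assoc ((1 - _ ^ 2 : ℝ) ^ (a + 1)), intervalIntegral.integral_mul_const] at hparts
  have : 2 * (a + 1) ≠ 0 := by linarith
  rw [besselIntegral, div_mul_eq_mul_div, eq_div_iff this]
  linarith

lemma hasDerivAt_besselIntegral (ha : -1 < a) (x : ℝ) :
    HasDerivAt (besselIntegral a) (x / (2 * (a + 1)) * besselIntegral (a + 1) x) x :=
  integral_one_sub_sq_rpow_mul_id_mul_exp ha x ▸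
    hasDerivAt_integral_mul_exp (intervalIntegrable_one_sub_sq_rpow ha) x

lemma integral_one_sub_sq_rpow_mul_sq_mul_exp (ha : -1 < a) (x : ℝ) :
    ∫ t in (-1 : ℝ)..1, (1 - t ^ 2) ^ a * (t * (t * Real.exp (x * t))) =
      besselIntegral a x - besselIntegral (a + 1) x := by
  rw [besselIntegral, besselIntegral,
    ← integral_sub (intervalIntegrable_one_sub_sq_rpow_mul ha (by fun_prop))
      (intervalIntegrable_one_sub_sq_rpow_mul (by linarith) (by fun_prop))]
  refine integral_congr fun t ht => ?_
  rw [Set.uIcc_of_le (by norm_num)] at ht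
  have hnonneg : 0 ≤ 1 - t ^ 2 := by nlinarith [ht.1, ht.2]
  simp only [Real.rpow_add_one' hnonneg (by linarith : a + 1 ≠ 0)]
  ring

lemma besselIntegral_recurrence (ha : -1 < a) (x : ℝ) :
    2 * (a + 1) * besselIntegral a x = (2 * a + 3) * besselIntegral (a + 1) x +
      x ^ 2 / (2 * (a + 2)) * besselIntegral (a + 2) x := by
  have ha' : -1 < a + 1 := by linarith
  have hparts := integral_one_sub_sq_rpow_add_one_mul_deriv ha
    (u := fun t => t * Real.exp (x * t))
    (u' := fun t => Real.exp (x * t) + x * (t * Real.exp (x * t))) (by fun_prop)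
    (fun t _ => ((hasDerivAt_id t).mul ((hasDerivAt_id t).const_mul x).exp).congr_deriv
      (by simp only [id]; ring))
    (Continuous.intervalIntegrable (by fun_prop) _ _)
  have hexpand : ∫ t in (-1 : ℝ)..1,
      (1 - t ^ 2) ^ (a + 1) * (Real.exp (x * t) + x * (t * Real.exp (x * t))) =
      besselIntegral (a + 1) x + x * (x / (2 * (a + 2)) * besselIntegral (a + 2) x) := by
    have hfirst := integral_one_sub_sq_rpow_mul_id_mul_exp ha' x
    rw [show a + 1 + 1 = a + 2 by ring] at hfirst
    simp only [mul_add ((1 - _ ^ 2 : ℝ) ^ (a + 1)), mul_left_comm _ x]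
    rw [integral_add (intervalIntegrable_one_sub_sq_rpow_mul ha' (by fun_prop))
      ((intervalIntegrable_one_sub_sq_rpow_mul ha' (by fun_prop)).const_mul x),
      intervalIntegral.integral_const_mul, hfirst]
    simp only [besselIntegral]
  rw [hexpand, integral_one_sub_sq_rpow_mul_sq_mul_exp ha] at hparts
  linear_combination -hparts

lemma besselIntegral_add_one_zero (ha : -1 < a) :
    besselIntegral (a + 1) 0 = 2 * (a + 1) / (2 * a + 3) * besselIntegral a 0 := by
  have : 2 * a + 3 ≠ 0 := by linarith
  rw [div_mul_eq_mul_div, eq_div_iff this]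
  linear_combination -besselIntegral_recurrence ha 0

end BesselIntegral

section Hfun

variable {ν : ℝ}

lemma Hfun_eq_besselIntegral_div {a : ℝ} (ha : ν = a + 1 / 2) (x : ℝ) :
    Hfun ν x = besselIntegral a x / besselIntegral a 0 := by
  simp [Hfun, besselIntegral, ha]

lemma Hfun_pos (hν : -1 / 2 < ν) (x : ℝ) : 0 < Hfun ν x := by
  have ha : -1 < ν - 1 / 2 := by linarith
  rw [Hfun_eq_besselIntegral_div (sub_add_cancel ν (1 / 2)).symm]
  exact div_pos (besselIntegral_pos ha x) (besselIntegral_pos ha 0)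

lemma Hfun_recurrence (hν : -1 / 2 < ν) (x : ℝ) :
    Hfun ν x = Hfun (ν + 1) x + x ^ 2 / (4 * (ν + 1) * (ν + 2)) * Hfun (ν + 2) x := by
  obtain ⟨a, rfl⟩ : ∃ a, ν = a + 1 / 2 := ⟨ν - 1 / 2, by ring⟩
  have ha : -1 < a := by linarith
  have ha₁ : a + 1 ≠ 0 := by linarith
  have ha₂ : a + 2 ≠ 0 := by linarith
  have ha₃ : 2 * a + 3 ≠ 0 := by linarith
  have ha₅ : 2 * a + 5 ≠ 0 := by linarith
  have hpos := besselIntegral_pos ha 0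
  have hone : besselIntegral (a + 1) 0 = 2 * (a + 1) / (2 * a + 3) * besselIntegral a 0 :=
    besselIntegral_add_one_zero ha
  have htwo : besselIntegral (a + 2) 0 =
      2 * (a + 2) / (2 * a + 5) * (2 * (a + 1) / (2 * a + 3) * besselIntegral a 0) := by
    rw [← hone, show a + 2 = a + 1 + 1 by ring, besselIntegral_add_one_zero (by linarith)]
    ring_nf
  rw [Hfun_eq_besselIntegral_div rfl,
    Hfun_eq_besselIntegral_div (by ring : a + 1 / 2 + 1 = a + 1 + 1 / 2),
    Hfun_eq_besselIntegral_div (by ring : a + 1 / 2 + 2 = a + 2 + 1 / 2), hone, htwo,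
    show a + 1 / 2 + 1 = (2 * a + 3) / 2 by ring, show a + 1 / 2 + 2 = (2 * a + 5) / 2 by ring]
  have hrec := besselIntegral_recurrence ha x
  field_simp at hrec ⊢
  linear_combination 2 * hrec

lemma hasDerivAt_Hfun (hν : -1 / 2 < ν) (x : ℝ) :
    HasDerivAt (Hfun ν) (x / (2 * (ν + 1)) * Hfun (ν + 1) x) x := by
  obtain ⟨a, rfl⟩ : ∃ a, ν = a + 1 / 2 := ⟨ν - 1 / 2, by ring⟩
  have ha : -1 < a := by linarith
  have ha₁ : a + 1 ≠ 0 := by linarith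
  have ha₃ : 2 * a + 3 ≠ 0 := by linarith
  have hderiv := (hasDerivAt_besselIntegral ha x).div_const (besselIntegral a 0)
  refine (hderiv.congr_deriv ?_).congr_of_eventuallyEq
    (.of_forall <| Hfun_eq_besselIntegral_div rfl)
  rw [Hfun_eq_besselIntegral_div (by ring : a + 1 / 2 + 1 = a + 1 + 1 / 2),
    besselIntegral_add_one_zero ha, show a + 1 / 2 + 1 = (2 * a + 3) / 2 by ring]
  field_simp

lemma Hfun_add_one_le (hν : -1 / 2 < ν) (x : ℝ) : Hfun (ν + 1) x ≤ Hfun ν x := by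
  have hpos := Hfun_pos (ν := ν + 2) (by linarith) x
  have hν₁ : 0 < ν + 1 := by linarith
  have hν₂ : 0 < ν + 2 := by linarith
  rw [Hfun_recurrence hν x]
  exact le_add_of_nonneg_right (by positivity)

lemma logDeriv_Hfun (hν : -1 / 2 < ν) (x : ℝ) :
    logDeriv (Hfun ν) x = x / (2 * (ν + 1)) -
      x ^ 3 / (8 * (ν + 1) ^ 2 * (ν + 2)) * (Hfun (ν + 2) x / Hfun ν x) := by
  have hpos := Hfun_pos hν x
  have hν₁ : ν + 1 ≠ 0 := by linarith
  have hν₂ : ν + 2 ≠ 0 := by linarith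
  rw [logDeriv_apply, (hasDerivAt_Hfun hν x).deriv,
    eq_sub_of_add_eq (Hfun_recurrence hν x).symm]
  field_simp
  ring

lemma abs_logDeriv_Hfun_sub_le (hν : -1 / 2 < ν) (x : ℝ) :
    |logDeriv (Hfun ν) x - x / (2 * (ν + 1))| ≤ (|x| / (2 * (ν + 1))) ^ 3 := by
  have hpos := Hfun_pos hν x
  have hpos₂ := Hfun_pos (ν := ν + 2) (by linarith) x
  have hν₁ : 0 < ν + 1 := by linarith
  have hratio : Hfun (ν + 2) x / Hfun ν x ≤ 1 := by
    refine (div_le_one hpos).2 ?_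
    calc Hfun (ν + 2) x = Hfun (ν + 1 + 1) x := by ring_nf
      _ ≤ Hfun (ν + 1) x := Hfun_add_one_le (by linarith) x
      _ ≤ Hfun ν x := Hfun_add_one_le hν x
  have hν₂ : 0 < ν + 2 := by linarith
  calc |logDeriv (Hfun ν) x - x / (2 * (ν + 1))|
      = |x| ^ 3 / (8 * (ν + 1) ^ 2 * (ν + 2)) * (Hfun (ν + 2) x / Hfun ν x) := by
        rw [logDeriv_Hfun hν, sub_sub_cancel_left, abs_neg, abs_mul, abs_div, abs_pow,
          abs_of_pos (div_pos hpos₂ hpos),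
          abs_of_pos (by positivity : 0 < 8 * (ν + 1) ^ 2 * (ν + 2))]
    _ ≤ |x| ^ 3 / (8 * (ν + 1) ^ 2 * (ν + 1)) * 1 := by gcongr; norm_num
    _ = (|x| / (2 * (ν + 1))) ^ 3 := by rw [mul_one, div_pow]; ring_nf

lemma abs_log_Hfun_sub_log_Hfun_sub_le {B x y : ℝ} (hν : -1 / 2 < ν) (hx : |x| ≤ B) (hy : |y| ≤ B) :
    |Real.log (Hfun ν x) - Real.log (Hfun ν y) - (x ^ 2 - y ^ 2) / (4 * (ν + 1))| ≤
      (B / (2 * (ν + 1))) ^ 3 * |x - y| := by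
  have hν₁ : 0 < ν + 1 := by linarith
  have hderiv (z : ℝ) : HasDerivAt (fun z => Real.log (Hfun ν z) - z ^ 2 / (4 * (ν + 1)))
      (logDeriv (Hfun ν) z - z / (2 * (ν + 1))) z := by
    have hdiff := (hasDerivAt_Hfun hν z).differentiableAt
    refine ((hdiff.hasDerivAt.log (Hfun_pos hν z).ne').sub
      ((hasDerivAt_pow 2 z).div_const (4 * (ν + 1)))).congr_deriv ?_
    rw [logDeriv_apply]
    congr 1
    field_simp
    norm_num
    ring
  have hbound : ∀ z ∈ Set.Icc (-B) B,
      ‖logDeriv (Hfun ν) z - z / (2 * (ν + 1))‖ ≤ (B / (2 * (ν + 1))) ^ 3 := fun z hz =>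
    (abs_logDeriv_Hfun_sub_le hν z).trans (by gcongr; exact abs_le.2 hz)
  have hmvt := (convex_Icc (-B) B).norm_image_sub_le_of_norm_hasDerivWithin_le
    (fun z _ => (hderiv z).hasDerivWithinAt) hbound (abs_le.1 hy) (abs_le.1 hx)
  rw [Real.norm_eq_abs, Real.norm_eq_abs] at hmvt
  convert hmvt using 2
  ring

end Hfun

lemma abs_log_Hfun_rescaled_sub_le {p N B u v : ℝ} (hp : 1 < p) (hN : 0 < N)
    (hu : |u| ≤ B) (hv : |v| ≤ B) :
    |N * (Real.log (Hfun (p / 2 - 1) (p * u / √N)) - Real.log (Hfun (p / 2 - 1) (p * v / √N))) -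
        p * (u ^ 2 - v ^ 2) / 2| ≤ p * B ^ 3 * |u - v| / N := by
  have hp0 : 0 < p := by linarith
  have hsq : √N ^ 2 = N := Real.sq_sqrt hN.le
  have hscale (z : ℝ) : |p * z / √N| = p * |z| / √N := by
    rw [abs_div, abs_mul, abs_of_pos hp0, abs_of_nonneg (Real.sqrt_nonneg N)]
  have hlog := abs_log_Hfun_sub_log_Hfun_sub_le (ν := p / 2 - 1) (B := p * B / √N) (by linarith)
    (x := p * u / √N) (y := p * v / √N) (by rw [hscale]; gcongr) (by rw [hscale]; gcongr)
  rw [← sub_div, ← mul_sub, hscale, show 4 * (p / 2 - 1 + 1) = 2 * p by ring,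
    show 2 * (p / 2 - 1 + 1) = p by ring] at hlog
  have hquad : N * (((p * u / √N) ^ 2 - (p * v / √N) ^ 2) / (2 * p)) =
      p * (u ^ 2 - v ^ 2) / 2 := by
    rw [div_pow, div_pow, hsq]
    field_simp
  rw [← hquad, ← mul_sub, abs_mul, abs_of_pos hN]
  calc _ ≤ N * ((p * B / √N / p) ^ 3 * (p * |u - v| / √N)) := by gcongr
    _ = N * (p * B ^ 3 * |u - v|) / (√N ^ 2) ^ 2 := by field_simp
    _ = p * B ^ 3 * |u - v| / N := by rw [hsq]; field_simp

lemma abs_log_Hfun_shift_sub_le {p N : ℝ} (hp : 1 < p) (hN : 0 < N) (ξ s : ℝ) :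
    |N * (Real.log (Hfun (p / 2 - 1) (p * ξ / √N)) -
        Real.log (Hfun (p / 2 - 1) (p * (ξ + s / √p) / √N))) + s * ξ * √p - -(s ^ 2) / 2| ≤
      (|ξ| + |s|) ^ 3 * |s| * √(p / N ^ 2) := by
  have hp0 : 0 < p := by linarith
  have hsqrt : 0 < √p := Real.sqrt_pos.2 hp0
  have hsq : √p ^ 2 = p := Real.sq_sqrt hp0.le
  have habs : |s / √p| = |s| / √p := by rw [abs_div, abs_of_pos hsqrt]
  have hshift : |ξ + s / √p| ≤ |ξ| + |s| :=
    calc |ξ + s / √p| ≤ |ξ| + |s| / √p := (abs_add_le _ _).trans_eq (by rw [habs])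
      _ ≤ |ξ| + |s| := by gcongr; exact div_le_self (abs_nonneg s) (Real.one_le_sqrt.2 hp.le)
  have hmain : p * (ξ ^ 2 - (ξ + s / √p) ^ 2) / 2 = -(s * ξ * √p) + -(s ^ 2) / 2 := by
    nth_rw 1 [← hsq]
    field_simp
    ring
  have herror : p * (|ξ| + |s|) ^ 3 * |ξ - (ξ + s / √p)| / N =
      (|ξ| + |s|) ^ 3 * |s| * √(p / N ^ 2) := by
    rw [sub_add_cancel_left, abs_neg, habs, Real.sqrt_div hp0.le, Real.sqrt_sq hN.le]
    nth_rw 1 [← hsq]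
    field_simp
  have hlog := abs_log_Hfun_rescaled_sub_le hp hN (le_add_of_nonneg_right (abs_nonneg s)) hshift
  rwa [hmain, herror, ← sub_sub, sub_neg_eq_add] at hlog

theorem log_Hfun_concentration_shift_general {ι : Type*} {l : Filter ι} {p N : ι → ℝ}
    (hp : ∀ᶠ i in l, 1 < p i) (hN : ∀ᶠ i in l, 0 < N i)
    (hpN : Tendsto (fun i => p i / N i ^ 2) l (nhds 0)) (ξ s : ℝ) :
    Tendsto (fun i => N i * (Real.log (Hfun (p i / 2 - 1) (p i * ξ / √(N i))) -
        Real.log (Hfun (p i / 2 - 1) (p i * (ξ + s / √(p i)) / √(N i)))) + s * ξ * √(p i))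
      l (nhds (-(s ^ 2) / 2)) := by
  rw [tendsto_iff_norm_sub_tendsto_zero]
  have herror : Tendsto (fun i => (|ξ| + |s|) ^ 3 * |s| * √(p i / N i ^ 2)) l (nhds 0) := by
    simpa using hpN.sqrt.const_mul ((|ξ| + |s|) ^ 3 * |s|)
  refine squeeze_zero' (.of_forall fun _ => norm_nonneg _) ?_ herror
  filter_upwards [hp, hN] with i hpi hNi using abs_log_Hfun_shift_sub_le hpi hNi ξ s

theorem log_Hfun_concentration_shift (p : ℕ → ℕ) (hp2 : ∀ n, 2 ≤ p n)
    (hp : Tendsto (fun n => (p n : ℝ)) atTop atTop)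
    (hpo : Tendsto (fun n => (p n : ℝ) / (n : ℝ) ^ 2) atTop (nhds 0))
    (ξ : ℝ) (hξ : 0 < ξ) (s : ℝ)
    (hpos : ∀ n, 0 < ξ + s / Real.sqrt (p n)) :
    Tendsto
      (fun n : ℕ =>
        (n : ℝ) *
            (Real.log (Hfun ((p n : ℝ) / 2 - 1) ((p n : ℝ) * ξ / Real.sqrt n)) -
              Real.log (Hfun ((p n : ℝ) / 2 - 1)
                ((p n : ℝ) * (ξ + s / Real.sqrt (p n)) / Real.sqrt n))) +
          s * ξ * Real.sqrt (p n))
      atTop (nhds (-(s ^ 2) / 2)) :=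
  log_Hfun_concentration_shift_general (.of_forall fun n => Nat.one_lt_cast.2 (hp2 n))
    (eventually_gt_atTop 0 |>.mono fun _ => Nat.cast_pos.2) hpo ξ s
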